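/- Let B be a finite set, M a right-angled Coxeter matrix on B, and W the associated Coxeter group with generators (r_b)_{b ∈ B}. Let V be an F_2-vector space, (λ_b)_{b ∈ B} a family of vectors of V, and λ : W → V the group homomorphism with λ(r_b) = λ_b for all b. Assume that for every clique C ⊆ B the family (λ_b)_{b ∈ C} is linearly independent in V. Then the kernel of λ is torsion-free: every element of ker λ other than the identity has infinite order. -/

import Mathlib

namespace CoxeterSystem

open scoped Classical

variable {B W : Type*} [Group W] {M : CoxeterMatrix B} (cs : CoxeterSystem M W)

/-- The standard parabolic subgroup generated by the simple reflections indexed by `J`. -/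
def parabolic (J : Set B) : Subgroup W := Subgroup.closure (cs.simple '' J)

/-- A Coxeter matrix is right-angled if its off-diagonal entries are `2` or `0`. -/
def _root_.CoxeterMatrix.IsRightAngled (M : CoxeterMatrix B) : Prop :=
  ∀ b b' : B, b ≠ b' → M b b' = 2 ∨ M b b' = 0

/-- The star of `b` in the commutation graph of `M`. -/
def _root_.CoxeterMatrix.star (M : CoxeterMatrix B) (b : B) : Set B := {c | c = b ∨ M c b = 2}

/-- The formal walls of `W`: translates of a wall of type `b`, whose stabilizer is the parabolic
subgroup of the star of `b`. -/
abbrev Wall : Type _ := Σ b : B, W ⧸ cs.parabolic (M.star b)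

/-- The wall of type `b` adjacent to the identity. -/
def baseWall (b : B) : cs.Wall := ⟨b, ((1 : W) : W ⧸ cs.parabolic (M.star b))⟩

theorem simple_mem_parabolic {J : Set B} {b : B} (hb : b ∈ J) :
    cs.simple b ∈ cs.parabolic J :=
  Subgroup.subset_closure ⟨b, hb, rfl⟩

theorem wordProd_mem_parabolic {J : Set B} {ω : List B} (h : ∀ b ∈ ω, b ∈ J) :
    cs.wordProd ω ∈ cs.parabolic J := by
  apply Subgroup.list_prod_mem
  simp only [List.mem_map]
  rintro _ ⟨b, hb, rfl⟩
  exact cs.simple_mem_parabolic (h b hb)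

theorem exists_word_of_mem_parabolic {J : Set B} {w : W} (hw : w ∈ cs.parabolic J) :
    ∃ ω : List B, (∀ b ∈ ω, b ∈ J) ∧ cs.wordProd ω = w := by
  induction hw using Subgroup.closure_induction with
  | mem x hx =>
    obtain ⟨b, hb, rfl⟩ := hx
    exact ⟨[b], by simpa using hb, by simp⟩
  | one => exact ⟨[], by simp, by simp⟩
  | mul x y _ _ hx hy =>
    obtain ⟨ω, h, rfl⟩ := hx
    obtain ⟨ω', h', rfl⟩ := hy
    refine ⟨ω ++ ω', fun b hb => ?_, cs.wordProd_append ω ω'⟩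
    exact (List.mem_append.1 hb).elim (h b) (h' b)
  | inv x _ hx =>
    obtain ⟨ω, h, rfl⟩ := hx
    exact ⟨ω.reverse, by simpa using h, cs.wordProd_reverse ω⟩

theorem simple_commute {b c : B} (h : M b c = 2) : Commute (cs.simple b) (cs.simple c) := by
  have h1 := cs.simple_mul_simple_pow b c
  rw [h, pow_two, mul_eq_one_iff_eq_inv, mul_inv_rev, cs.inv_simple, cs.inv_simple] at h1
  exact h1

theorem commute_of_mem_parabolic_star {b : B} {w : W} (hw : w ∈ cs.parabolic (M.star b)) :
    Commute w (cs.simple b) := by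
  induction hw using Subgroup.closure_induction with
  | mem x hx =>
    obtain ⟨c, rfl | hc, rfl⟩ := hx
    · rfl
    · exact cs.simple_commute hc
  | one => exact Commute.one_left _
  | mul x y _ _ hx hy => exact hx.mul_left hy
  | inv x _ hx => exact hx.inv_left

theorem smul_baseWall_eq_iff {w : W} {b c : B} :
    w • cs.baseWall b = cs.baseWall c ↔ b = c ∧ w ∈ cs.parabolic (M.star b) := by
  constructor
  · intro h
    obtain rfl : b = c := congrArg Sigma.fst h
    have h2 : ((w * 1 : W) : W ⧸ cs.parabolic (M.star b)) = ((1 : W) : W ⧸ _) :=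
      eq_of_heq (Sigma.mk.inj h).2
    rw [QuotientGroup.eq] at h2
    exact ⟨rfl, by simpa using h2⟩
  · rintro ⟨rfl, h⟩
    refine Sigma.ext rfl (heq_of_eq ?_)
    change ((w * 1 : W) : W ⧸ cs.parabolic (M.star b)) = ((1 : W) : W ⧸ _)
    rw [QuotientGroup.eq]
    simpa using h

theorem simple_smul_baseWall {b c : B} (h : c ∈ M.star b) :
    cs.simple c • cs.baseWall b = cs.baseWall b :=
  cs.smul_baseWall_eq_iff.2 ⟨rfl, cs.simple_mem_parabolic h⟩

/-- The affine action of a simple reflection on sets of walls: translate and cross the base wall. -/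
noncomputable def crossSimple (b : B) : Function.End (cs.Wall → ZMod 2) :=
  fun φ t => φ (cs.simple b • t) + if t = cs.baseWall b then 1 else 0

theorem crossSimple_liftable (hM : M.IsRightAngled) :
    M.IsLiftable cs.crossSimple := by
  have hsq (b : B) : cs.crossSimple b * cs.crossSimple b = 1 := by
    funext φ t
    change φ (cs.simple b • cs.simple b • t) + (if cs.simple b • t = cs.baseWall b then 1 else 0)
      + (if t = cs.baseWall b then 1 else 0) = φ t
    have h : cs.simple b • t = cs.baseWall b ↔ t = cs.baseWall b := by
      rw [← eq_inv_smul_iff, cs.inv_simple, cs.simple_smul_baseWall (Or.inl rfl)]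
    rw [if_congr h rfl rfl, smul_smul, cs.simple_mul_simple_self, one_smul, add_assoc,
      CharTwo.add_self_eq_zero, add_zero]
  intro b c
  rcases eq_or_ne b c with rfl | hbc
  · rw [hsq, one_pow]
  rcases hM b c hbc with h | h
  · have hcomm : cs.crossSimple b * cs.crossSimple c = cs.crossSimple c * cs.crossSimple b := by
      funext φ t
      change φ (cs.simple c • cs.simple b • t) + (if cs.simple b • t = cs.baseWall c then 1 else 0)
        + (if t = cs.baseWall b then 1 else 0) = φ (cs.simple b • cs.simple c • t)
        + (if cs.simple c • t = cs.baseWall b then 1 else 0) + (if t = cs.baseWall c then 1 else 0)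
      have h1 : cs.simple b • t = cs.baseWall c ↔ t = cs.baseWall c := by
        rw [← eq_inv_smul_iff, cs.inv_simple, cs.simple_smul_baseWall (Or.inr h)]
      have h2 : cs.simple c • t = cs.baseWall b ↔ t = cs.baseWall b := by
        rw [← eq_inv_smul_iff, cs.inv_simple,
          cs.simple_smul_baseWall (Or.inr ((M.symmetric c b).trans h))]
      rw [if_congr h1 rfl rfl, if_congr h2 rfl rfl, smul_smul, smul_smul,
        (cs.simple_commute h).eq, add_right_comm]
    rw [h, pow_two, mul_assoc, ← mul_assoc (cs.crossSimple c), ← hcomm, mul_assoc, hsq, mul_one,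
      hsq]
  · rw [h, pow_zero]

/-- The mod 2 indicator of whether a wall separates `w` from the identity. -/
noncomputable def separation (hM : M.IsRightAngled) (w : W) : cs.Wall → ZMod 2 :=
  cs.lift ⟨cs.crossSimple, cs.crossSimple_liftable hM⟩ w 0

theorem separation_one (hM : M.IsRightAngled) (t : cs.Wall) : cs.separation hM 1 t = 0 := by
  rw [separation, map_one]
  rfl

theorem separation_simple_mul (hM : M.IsRightAngled) (b : B) (w : W) (t : cs.Wall) :
    cs.separation hM (cs.simple b * w) t =
      cs.separation hM w (cs.simple b • t) + if t = cs.baseWall b then 1 else 0 := by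
  rw [separation, map_mul, cs.lift_apply_simple]
  rfl

theorem exists_split_of_separation_ne_zero (hM : M.IsRightAngled) {ω : List B} {t : cs.Wall}
    (h : cs.separation hM (cs.wordProd ω) t ≠ 0) :
    ∃ α b β, ω = α ++ b :: β ∧ t = cs.wordProd α • cs.baseWall b := by
  induction ω generalizing t with
  | nil => exact absurd (by rw [wordProd_nil, separation_one]) h
  | cons c ω ih =>
    by_cases ht : t = cs.baseWall c
    · exact ⟨[], c, ω, rfl, by simpa using ht⟩
    · rw [wordProd_cons, separation_simple_mul, if_neg ht, add_zero] at h
      obtain ⟨α, b, β, rfl, h2⟩ := ih h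
      refine ⟨c :: α, b, β, rfl, ?_⟩
      rw [wordProd_cons, mul_smul, ← h2, smul_smul, simple_mul_simple_self, one_smul]

theorem isLeftDescent_of_split {α β : List B} {s : B} {w : W}
    (hw : w = cs.wordProd (α ++ s :: β)) (hlen : cs.length w = (α ++ s :: β).length)
    (hα : cs.wordProd α ∈ cs.parabolic (M.star s)) : cs.IsLeftDescent w s := by
  have h : cs.simple s * w = cs.wordProd (α ++ β) := by
    rw [hw, wordProd_append, wordProd_append, wordProd_cons, ← mul_assoc, ← mul_assoc,
      ← (cs.commute_of_mem_parabolic_star hα).eq, simple_mul_simple_cancel_right]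
  have h2 := cs.length_wordProd_le (α ++ β)
  rw [IsLeftDescent, h, hlen]
  simp only [List.length_append, List.length_cons] at *
  omega

theorem exists_split_of_separation_baseWall_ne_zero (hM : M.IsRightAngled) {ω : List B} {s : B}
    (h : cs.separation hM (cs.wordProd ω) (cs.baseWall s) ≠ 0) :
    ∃ α β, ω = α ++ s :: β ∧ cs.wordProd α ∈ cs.parabolic (M.star s) := by
  obtain ⟨α, b, β, rfl, h2⟩ := cs.exists_split_of_separation_ne_zero hM h
  obtain ⟨rfl, h3⟩ := cs.smul_baseWall_eq_iff.1 h2.symm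
  exact ⟨α, β, rfl, h3⟩

theorem isLeftDescent_of_separation_ne_zero (hM : M.IsRightAngled) {w : W} {s : B}
    (h : cs.separation hM w (cs.baseWall s) ≠ 0) : cs.IsLeftDescent w s := by
  obtain ⟨ω, hω, rfl⟩ := cs.exists_isReduced w
  obtain ⟨α, β, rfl, hα⟩ := cs.exists_split_of_separation_baseWall_ne_zero hM h
  exact cs.isLeftDescent_of_split rfl hω hα

theorem isLeftDescent_iff_separation_ne_zero (hM : M.IsRightAngled) {w : W} {s : B} :
    cs.IsLeftDescent w s ↔ cs.separation hM w (cs.baseWall s) ≠ 0 := by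
  refine ⟨fun h h0 => ?_, cs.isLeftDescent_of_separation_ne_zero hM⟩
  rw [isLeftDescent_iff_not_isLeftDescent_mul] at h
  refine h (cs.isLeftDescent_of_separation_ne_zero hM ?_)
  rw [separation_simple_mul, cs.simple_smul_baseWall (Or.inl rfl), h0, if_pos rfl]
  decide

theorem isLeftDescent_simple_mul_iff (hM : M.IsRightAngled)
    {w : W} {r s : B} (hrs : r ≠ s) (h : M r s = 2) :
    cs.IsLeftDescent (cs.simple r * w) s ↔ cs.IsLeftDescent w s := by
  rw [cs.isLeftDescent_iff_separation_ne_zero hM, cs.isLeftDescent_iff_separation_ne_zero hM,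
    separation_simple_mul, cs.simple_smul_baseWall (Or.inr h), if_neg, add_zero]
  exact fun he => hrs (congrArg Sigma.fst he).symm

theorem mem_of_isLeftDescent_of_mem_parabolic (hM : M.IsRightAngled) {J : Set B} {w : W} {s : B}
    (hw : w ∈ cs.parabolic J) (hs : cs.IsLeftDescent w s) : s ∈ J := by
  obtain ⟨ω, hω, rfl⟩ := cs.exists_word_of_mem_parabolic hw
  obtain ⟨α, β, rfl, -⟩ := cs.exists_split_of_separation_baseWall_ne_zero hM
    ((cs.isLeftDescent_iff_separation_ne_zero hM).1 hs)
  exact hω s (by simp)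

theorem IsReduced.mem_of_wordProd_mem_parabolic (hM : M.IsRightAngled)
    {cs : CoxeterSystem M W} {J : Set B} {ω : List B}
    (hω : cs.IsReduced ω) (h : cs.wordProd ω ∈ cs.parabolic J) : ∀ b ∈ ω, b ∈ J := by
  induction ω with
  | nil => simp
  | cons c ω ih =>
    have hω' : cs.IsReduced ω := hω.drop 1
    have hc : c ∈ J := by
      refine cs.mem_of_isLeftDescent_of_mem_parabolic hM h ?_
      exact cs.isLeftDescent_of_split (α := []) rfl hω (by simp [one_mem])
    have h2 : cs.wordProd ω ∈ cs.parabolic J := by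
      rwa [wordProd_cons, Subgroup.mul_mem_cancel_left _ (cs.simple_mem_parabolic hc)] at h
    simpa [hc] using ih hω' h2

theorem IsReduced.exists_split_of_isLeftDescent (hM : M.IsRightAngled)
    {cs : CoxeterSystem M W} {ω : List B} {s : B}
    (hω : cs.IsReduced ω) (hs : cs.IsLeftDescent (cs.wordProd ω) s) :
    ∃ α β, ω = α ++ s :: β ∧ ∀ b ∈ α, b ∈ M.star s := by
  obtain ⟨α, β, rfl, h⟩ := cs.exists_split_of_separation_baseWall_ne_zero hM
    ((cs.isLeftDescent_iff_separation_ne_zero hM).1 hs)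
  refine ⟨α, β, rfl, IsReduced.mem_of_wordProd_mem_parabolic hM ?_ h⟩
  simpa using hω.take α.length

theorem coxeterMatrix_eq_two_of_isLeftDescent (hM : M.IsRightAngled) {w : W} {r s : B} (hrs : r ≠ s)
    (hr : cs.IsLeftDescent w r) (hs : cs.IsLeftDescent w s) : M r s = 2 := by
  obtain ⟨ω, hω, h⟩ := cs.exists_isReduced (cs.simple r * w)
  have hw : w = cs.wordProd (r :: ω) := by
    rw [wordProd_cons, ← h, simple_mul_simple_cancel_left]
  have hred : cs.IsReduced (r :: ω) := by
    rw [IsReduced, ← hw, List.length_cons, ← hω.eq, ← h]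
    exact (cs.isLeftDescent_iff.1 hr).symm
  obtain ⟨α, β, h1, h2⟩ := IsReduced.exists_split_of_isLeftDescent hM hred (hw ▸ hs)
  cases α with
  | nil => exact absurd (List.cons.inj h1).1 hrs
  | cons c α =>
    obtain rfl := (List.cons.inj h1).1
    exact (h2 r (by simp)).resolve_left hrs

theorem length_mul_eq_add (hM : M.IsRightAngled) {u v : W}
    (h : ∀ s, cs.IsRightDescent u s → ¬ cs.IsLeftDescent v s) :
    cs.length (u * v) = cs.length u + cs.length v := by
  induction hn : cs.length u generalizing u v with
  | zero => rw [cs.length_eq_zero_iff] at hn; simp [hn]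
  | succ n ih =>
    have hu : u ≠ 1 := by
      rintro rfl
      simp at hn
    obtain ⟨s, hs⟩ := cs.exists_rightDescent_of_ne_one hu
    have hsv := cs.not_isLeftDescent_iff.1 (h s hs)
    have hlen := cs.isRightDescent_iff.1 hs
    have key := ih (u := u * cs.simple s) (v := cs.simple s * v) (fun r hr hrv => ?_) (by omega)
    · rw [mul_assoc, simple_mul_simple_cancel_left] at key
      omega
    rcases eq_or_ne s r with rfl | hsr
    · exact cs.isRightDescent_iff_not_isRightDescent_mul.1 hs hr
    have hM2 : M s r = 2 := by
      refine cs.coxeterMatrix_eq_two_of_isLeftDescent hM hsr ?_ hrv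
      rw [isLeftDescent_iff_not_isLeftDescent_mul, simple_mul_simple_cancel_left]
      exact h s hs
    refine h r ?_ ((cs.isLeftDescent_simple_mul_iff hM hsr hM2).1 hrv)
    rw [← isLeftDescent_inv_iff] at hr ⊢
    rwa [mul_inv_rev, inv_simple, cs.isLeftDescent_simple_mul_iff hM hsr hM2] at hr

theorem mem_parabolic_star_of_isLeftDescent_mul (hM : M.IsRightAngled) {u v : W} {s : B}
    (hlen : cs.length (u * v) = cs.length u + cs.length v) (hs : cs.IsLeftDescent (u * v) s)
    (hu : ¬ cs.IsLeftDescent u s) : u ∈ cs.parabolic (M.star s) := by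
  obtain ⟨ω, hω, rfl⟩ := cs.exists_isReduced u
  obtain ⟨ω', hω', rfl⟩ := cs.exists_isReduced v
  rw [hω.eq, hω'.eq, ← List.length_append, ← wordProd_append] at hlen
  rw [← wordProd_append] at hs
  obtain ⟨α, β, h, hα⟩ := IsReduced.exists_split_of_isLeftDescent hM hlen hs
  rcases List.append_eq_append_iff.1 h with ⟨γ, rfl, -⟩ | ⟨γ, rfl, hγ⟩
  · exact cs.wordProd_mem_parabolic fun b hb => hα b (List.mem_append_left _ hb)
  · cases γ with
    | nil => simpa using cs.wordProd_mem_parabolic hα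
    | cons c γ =>
      obtain rfl := (List.cons.inj hγ).1
      exact absurd (cs.isLeftDescent_of_split rfl hω (cs.wordProd_mem_parabolic hα)) hu

theorem length_pow_eq_mul (hM : M.IsRightAngled)
    {w : W} (h : ∀ s, cs.IsRightDescent w s → ¬ cs.IsLeftDescent w s)
    (n : ℕ) : cs.length (w ^ n) = n * cs.length w := by
  induction n using Nat.strong_induction_on with
  | h n ih =>
    rcases n with - | n
    · simp
    rw [pow_succ', cs.length_mul_eq_add hM, ih n (Nat.lt_succ_self n), add_mul, one_mul, add_comm]
    intro s hs hsn
    rcases n with - | n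
    · exact cs.not_isLeftDescent_one s (by simpa using hsn)
    have hlen : cs.length (w * w ^ n) = cs.length w + cs.length (w ^ n) := by
      rw [← pow_succ', ih (n + 1) (by omega), ih n (by omega), add_mul, one_mul, add_comm]
    rw [pow_succ'] at hsn
    have hc := cs.commute_of_mem_parabolic_star
      (cs.mem_parabolic_star_of_isLeftDescent_mul hM hlen hsn (h s hs))
    refine h s hs ?_
    rwa [IsLeftDescent, ← hc.eq]

theorem exists_descent_of_isOfFinOrder (hM : M.IsRightAngled)
    {w : W} (hw : IsOfFinOrder w) (h1 : w ≠ 1) :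
    ∃ s, cs.IsRightDescent w s ∧ cs.IsLeftDescent w s := by
  by_contra! h
  obtain ⟨n, hn, hwn⟩ := isOfFinOrder_iff_pow_eq_one.1 hw
  have := cs.length_pow_eq_mul hM h n
  rw [hwn, length_one, eq_comm, mul_eq_zero, length_eq_zero_iff] at this
  exact this.elim hn.ne' h1

theorem mem_parabolic_star_of_not_isLeftDescent_mul_simple (hM : M.IsRightAngled) {w : W} {s : B}
    (hr : cs.IsRightDescent w s) (hl : cs.IsLeftDescent w s)
    (hs : ¬ cs.IsLeftDescent (w * cs.simple s) s) : w ∈ cs.parabolic (M.star s) := by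
  rw [← Subgroup.mul_mem_cancel_right _ (cs.simple_mem_parabolic (Or.inl rfl))]
  refine cs.mem_parabolic_star_of_isLeftDescent_mul hM (v := cs.simple s) ?_ ?_ hs
  · rw [simple_mul_simple_cancel_right, length_simple, cs.isRightDescent_iff.1 hr]
  · rwa [simple_mul_simple_cancel_right]

theorem mem_parabolic_link (hM : M.IsRightAngled)
    {J : Set B} {v : W} {s : B} (hJ : v ∈ cs.parabolic J)
    (hv : v ∈ cs.parabolic (M.star s)) (hs : ¬ cs.IsLeftDescent v s) :
    v ∈ cs.parabolic {b ∈ J | b ≠ s ∧ M b s = 2} := by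
  induction hn : cs.length v generalizing v with
  | zero => rw [cs.length_eq_zero_iff.1 hn]; exact one_mem _
  | succ n ih =>
    have hv1 : v ≠ 1 := by
      rintro rfl
      simp at hn
    obtain ⟨r, hr⟩ := cs.exists_leftDescent_of_ne_one hv1
    have hrs : r ≠ s := by
      rintro rfl
      exact hs hr
    have hrJ := cs.mem_of_isLeftDescent_of_mem_parabolic hM hJ hr
    have hrst := cs.mem_of_isLeftDescent_of_mem_parabolic hM hv hr
    have hlen := cs.isLeftDescent_iff.1 hr
    have key := ih (mul_mem (cs.simple_mem_parabolic hrJ) hJ)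
      (mul_mem (cs.simple_mem_parabolic hrst) hv)
      (by rwa [cs.isLeftDescent_simple_mul_iff hM hrs (hrst.resolve_left hrs)]) (by omega)
    rwa [Subgroup.mul_mem_cancel_left] at key
    exact cs.simple_mem_parabolic ⟨hrJ, hrs, hrst.resolve_left hrs⟩

/-- The image of a torsion element under a homomorphism to a commutative group is the image of the
product of a clique, which is nonempty unless the element is trivial. -/
theorem exists_clique_of_isOfFinOrder (hM : M.IsRightAngled)
    {A : Type*} [CommGroup A] (f : W →* A) {J : Set B} {w : W}
    (hJ : w ∈ cs.parabolic J) (hw : IsOfFinOrder w) :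
    ∃ C : Finset B, ↑C ⊆ J ∧ (∀ b ∈ C, ∀ b' ∈ C, b ≠ b' → M b b' = 2) ∧
      f w = ∏ b ∈ C, f (cs.simple b) ∧ (C = ∅ → w = 1) := by
  induction hn : cs.length w using Nat.strong_induction_on generalizing w J with
  | h n ih =>
    subst hn
    by_cases h1 : w = 1
    · exact ⟨∅, by simp, by simp, by simp [h1], fun _ => h1⟩
    obtain ⟨s, hr, hl⟩ := cs.exists_descent_of_isOfFinOrder hM hw h1
    have hsJ := cs.simple_mem_parabolic (cs.mem_of_isLeftDescent_of_mem_parabolic hM hJ hl)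
    by_cases hs : cs.IsLeftDescent (w * cs.simple s) s
    · have hlen : cs.length (cs.simple s * (w * cs.simple s)) < cs.length w := lt_trans hs hr
      have hfin : IsOfFinOrder (cs.simple s * (w * cs.simple s)) := by
        refine IsConj.isOfFinOrder (isConj_iff.2 ⟨cs.simple s, ?_⟩) hw
        rw [inv_simple, mul_assoc]
      obtain ⟨C, hCJ, hC, hf, hC1⟩ :=
        ih _ hlen (mul_mem hsJ (mul_mem hJ hsJ)) hfin rfl
      refine ⟨C, hCJ, hC, ?_, fun h => ?_⟩
      · rw [← hf, map_mul, map_mul, mul_left_comm, ← map_mul f, simple_mul_simple_self, map_one,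
          mul_one]
      · have h2 := hC1 h
        rwa [mul_eq_one_iff_eq_inv', inv_simple, mul_eq_right] at h2
    · have hst := cs.mem_parabolic_star_of_not_isLeftDescent_mul_simple hM hr hl hs
      have hcomm := cs.commute_of_mem_parabolic_star hst
      have hlink := cs.mem_parabolic_link hM (mul_mem hJ hsJ)
        (mul_mem hst (cs.simple_mem_parabolic (Or.inl rfl))) hs
      have hfin : IsOfFinOrder (w * cs.simple s) :=
        hcomm.isOfFinOrder_mul hw
          (isOfFinOrder_iff_pow_eq_one.2 ⟨2, two_pos, cs.simple_sq s⟩)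
      obtain ⟨C, hCJ, hC, hf, -⟩ := ih _ hr hlink hfin rfl
      have hsC : s ∉ C := fun h => (hCJ h).2.1 rfl
      refine ⟨insert s C, ?_, ?_, ?_, fun h => absurd h (Finset.insert_ne_empty s C)⟩
      · rw [Finset.coe_insert, Set.insert_subset_iff]
        exact ⟨cs.mem_of_isLeftDescent_of_mem_parabolic hM hJ hl, fun b hb => (hCJ hb).1⟩
      · intro b hb b' hb' hbb'
        rcases Finset.mem_insert.1 hb with rfl | hbC <;>
          rcases Finset.mem_insert.1 hb' with rfl | hbC'
        · exact absurd rfl hbb'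
        · exact (M.symmetric _ _).trans (hCJ hbC').2.2
        · exact (hCJ hbC).2.2
        · exact hC b hbC b' hbC' hbb'
      · rw [Finset.prod_insert hsC, ← hf, ← map_mul, hcomm.eq, simple_mul_simple_cancel_left]

end CoxeterSystem

/-- Let `B` be a finite set, `M` a right-angled Coxeter matrix on `B`,
`W` the associated Coxeter group with simple generators `cs.simple b`. Let `V` be an
`F₂`-vector space, `lam : B → V` a family of vectors, and `l : W →* Multiplicative V`
the homomorphism with `l (cs.simple b) = lam b` for all `b`. Assume that for every
clique `C ⊆ B` (with `b ≠ b'` adjacent iff `M b b' = 2`) the family `(lam b)_{b ∈ C}`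
is linearly independent. Then `ker l` is torsion-free: every element of the kernel
other than the identity has infinite order. -/
theorem coxeter_colouring_ker_torsionFree
    {B : Type*} [Finite B] (M : CoxeterMatrix B)
    (hM : ∀ b b' : B, b ≠ b' → M b b' = 2 ∨ M b b' = 0)
    {W : Type*} [Group W] (cs : CoxeterSystem M W)
    (V : Type*) [AddCommGroup V] [Module (ZMod 2) V]
    (lam : B → V)
    (l : W →* Multiplicative V)
    (hl : ∀ b : B, l (cs.simple b) = Multiplicative.ofAdd (lam b))
    (hind : ∀ C : Set B, (∀ b ∈ C, ∀ b' ∈ C, b ≠ b' → M b b' = 2) →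
      LinearIndependent (ZMod 2) (fun b : C => lam b)) :
    ∀ w : W, w ∈ l.ker → w ≠ 1 → ¬ IsOfFinOrder w := by
  intro w hw h1 hfin
  have htop : w ∈ cs.parabolic Set.univ := by
    rw [CoxeterSystem.parabolic, Set.image_univ, cs.subgroup_closure_range_simple]
    trivial
  obtain ⟨C, -, hC, hf, hC1⟩ := cs.exists_clique_of_isOfFinOrder hM l htop hfin
  refine h1 (hC1 ?_)
  have hsum : ∑ b ∈ C, lam b = 0 := by
    apply Multiplicative.ofAdd.injective
    rw [ofAdd_sum, ofAdd_zero, ← MonoidHom.mem_ker.1 hw, hf]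
    exact Finset.prod_congr rfl fun b _ => (hl b).symm
  have hli := hind (C : Set B) hC
  rw [Finset.eq_empty_iff_forall_notMem]
  intro b hb
  have := Fintype.linearIndependent_iff.1 hli (fun _ => 1)
    (by simpa [Finset.sum_attach C lam] using hsum) ⟨b, hb⟩
  exact one_ne_zero this
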